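/- Let C : Fin u → Set (Fin q) be a k-superimposed binary code, let F₁,…,F_c be set families each given by a tuple of K subsets of Fin u, Fᵢ = (F_{i,1},…,F_{i,K}), and let S = ⋃_{i=1}^{c} C^{⊗K}(Fᵢ) ⊆ (Fin q)^K. Then for every W ⊆ Fin u with |W| ≤ k: W satisfies [cover] (for every i there exists j with F_{i,j} ⊆ W) if and only if S ∩ ((Fin q) \ C(W))^K = ∅, where ((Fin q) \ C(W))^K is the set of tuples all of whose entries avoid C(W). -/

import Mathlib

/-!
The tensor encoding of `Fᵢ` and the set of tuples avoiding `C(W)` are both boxes, and two boxes are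
disjoint iff their sides in some coordinate are. In coordinate `j` this says `C(F i j) ⊆ C(W)`,
which amounts to `F i j ⊆ W` because no codeword of an element outside `W` is contained in `C(W)`.
-/

/-- The encoding of a set `X` by a binary code `C`: the union of the codewords of
the elements of `X`. -/
def codeUnion {u q : ℕ} (C : Fin u → Set (Fin q)) (X : Set (Fin u)) : Set (Fin q) :=
  ⋃ x ∈ X, C x

section

variable {α β ι κ : Type*} {C : α → Set β} {W : Set α}

theorem biUnion_subset_biUnion_iff_of_not_subset {X : Set α}
    (hC : ∀ y ∉ W, ¬ C y ⊆ ⋃ x ∈ W, C x) :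
    ⋃ x ∈ X, C x ⊆ ⋃ x ∈ W, C x ↔ X ⊆ W := by
  refine ⟨fun hXW y hyX ↦ ?_, Set.biUnion_subset_biUnion_left⟩
  by_contra hyW
  exact hC y hyW ((Set.subset_biUnion_of_mem hyX).trans hXW)

theorem cover_iff_tensor_disjoint_general (hC : ∀ y ∉ W, ¬ C y ⊆ ⋃ x ∈ W, C x)
    (F : ι → κ → Set α) :
    (∀ i, ∃ j, F i j ⊆ W) ↔
      Disjoint (⋃ i, Set.univ.pi fun j ↦ ⋃ x ∈ F i j, C x)
        (Set.univ.pi fun _ ↦ (⋃ x ∈ W, C x)ᶜ) := by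
  simp only [Set.disjoint_iUnion_left, Set.disjoint_univ_pi, Set.disjoint_compl_right_iff_subset,
    biUnion_subset_biUnion_iff_of_not_subset hC]

end

/-- For a `k`-superimposed code `C` and families `F₁, …, F_c` of `K`-tuples of subsets
of `Fin u`, with `S` the union of the tensor encodings `C^{⊗K}(Fᵢ)`, a set `W` of size
at most `k` satisfies [cover] iff `S` does not meet the tuples avoiding `C(W)`. -/
theorem cover_iff_tensor_disjoint {u q : ℕ} (c K k : ℕ)
    (hc : 1 ≤ c) (hK : 1 ≤ K) (hk : 1 ≤ k)
    (C : Fin u → Set (Fin q))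
    (hsup : ∀ X : Set (Fin u), X.ncard ≤ k → ∀ y ∉ X, ¬ C y ⊆ codeUnion C X)
    (F : Fin c → Fin K → Set (Fin u))
    (W : Set (Fin u)) (hW : W.ncard ≤ k) :
    (∀ i, ∃ j, F i j ⊆ W) ↔
      (⋃ i, {g : Fin K → Fin q | ∀ j, g j ∈ codeUnion C (F i j)}) ∩
          {g : Fin K → Fin q | ∀ j, g j ∉ codeUnion C W} = ∅ := by
  simpa only [codeUnion, Set.disjoint_iff_inter_eq_empty, Set.pi, Set.mem_univ,
    forall_const, Set.mem_compl_iff] using cover_iff_tensor_disjoint_general (hsup W hW) F
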